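/- Let q > 2 be an even prime power and r ≥ 3 odd, and let B be the hypersurface of PG(r,q²) defined below. Then |B| = q^{2r−1}+q^{2(r−2)}+q^{2(r−3)}+⋯+q²+1, and for every hyperplane Σ of PG(r,q²) the cardinality |B ∩ Σ| belongs to the set {n₁, n₂, n₃, n₄, n₅}, where n₁ = (q^{2(r−1)}−1)/(q²−1), n₂ = q^{2r−3}−q^{r−2}+(q^{2(r−2)}−1)/(q²−1), n₃ = q^{2r−3}+(q^{2(r−2)}−1)/(q²−1), n₄ = q^{2r−3}+q^{r−1}−q^{r−2}+(q^{2(r−2)}−1)/(q²−1), and n₅ = q^{2r−3}+(q^{2(r−1)}−1)/(q²−1). -/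

import Mathlib

/-- The affine equation
`x_r^q − x_r + α^q(x₁^{2q}+⋯+x_{r−1}^{2q}) − α(x₁²+⋯+x_{r−1}²)
  = (β^q−β)(x₁^{q+1}+⋯+x_{r−1}^{q+1})`. -/
def affEq {F : Type*} [Field F] (q r : ℕ) (α β : F) (x : Fin (r + 1) → F) : Prop :=
  x (Fin.last r) ^ q - x (Fin.last r)
      + α ^ q * (∑ i : Fin (r + 1), if 1 ≤ i.1 ∧ i.1 < r then x i ^ (2 * q) else 0)
      - α * (∑ i : Fin (r + 1), if 1 ≤ i.1 ∧ i.1 < r then x i ^ 2 else 0)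
    = (β ^ q - β) * (∑ i : Fin (r + 1), if 1 ≤ i.1 ∧ i.1 < r then x i ^ (q + 1) else 0)

/-- The hypersurface `B` of `PG(r,q²)`: the affine points (X₀ ≠ 0) whose affine
coordinates satisfy `affEq`, together with the points at infinity (X₀ = 0)
satisfying `X₁² + ⋯ + X_{r−1}² = 0`. -/
noncomputable def Bset (F : Type*) [Field F] (q r : ℕ) (α β : F) :
    Set (Projectivization F (Fin (r + 1) → F)) :=
  {P | (P.rep 0 ≠ 0 ∧ affEq q r α β fun i => P.rep i / P.rep 0) ∨
       (P.rep 0 = 0 ∧ (∑ i : Fin (r + 1), if 1 ≤ i.1 ∧ i.1 < r then P.rep i ^ 2 else 0) = 0)}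

/-!
Write `L z = z ^ q - z` and `y = x_r`. The affine equation of `B` reads
`L (y + α * ∑ xᵢ²) = L β * ∑ xᵢ ^ (q + 1)`. Its right-hand side, `L β` times an element of `GF(q)`,
always lies in the image of `L` (additive Hilbert 90). Hence every line `x = const` carries exactly
`q` affine points of `B`, which settles the size of the affine part and the hyperplanes through the
common point `(0 : ⋯ : 0 : 1)` of these lines.

On any other hyperplane `y` is an affine function of `(x₁, …, x_{r-1})`, and since `r - 1` is even
these coordinates can be written `(x, x + z)`. In characteristic two the squares of `x` cancel from
both sums, and what remains of the right-hand side is linear under `L` because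
`L β * (t ^ q + t) = L (L β * t)`. So for fixed `z` the equation becomes `L (w z ⬝ᵥ x) = g z`, with
`w` a bijection. It is satisfied by one `x` in `q` whenever `w z ≠ 0`, and the single `z` with
`w z = 0` contributes either none or all of the `x`: this is the source of the values `n₂` and `n₄`.

At infinity `∑ Xᵢ² = (∑ Xᵢ)²`, so the points of `B` there form a linear subspace, which a
hyperplane either contains or meets in a subspace of codimension one.
-/

theorem ncard_fiber_mul_card_range {G H : Type*} [AddGroup G] [AddGroup H] (φ : G →+ H) {c : H}
    (hc : c ∈ φ.range) : {g | φ g = c}.ncard * Nat.card φ.range = Nat.card G := by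
  obtain ⟨g₀, rfl⟩ := hc
  rw [← AddSubgroup.index_ker, ← φ.ker.card_mul_index]
  congr 1
  exact Nat.card_congr (φ.fiberEquivKer g₀)

theorem ncard_eq_sum_ncard_fiber {A B : Type*} [Fintype A] [Finite B] (s : Set (A × B)) :
    s.ncard = ∑ a, {b | (a, b) ∈ s}.ncard := by
  calc s.ncard = Nat.card (Σ a, {b | (a, b) ∈ s}) :=
        Nat.card_congr
          { toFun p := ⟨p.1.1, p.1.2, p.2⟩
            invFun t := ⟨(t.1, t.2.1), t.2.2⟩ }
    _ = ∑ a, {b | (a, b) ∈ s}.ncard := Nat.card_sigma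

theorem ncard_preimage_equiv {A B : Type*} (e : A ≃ B) (s : Set B) :
    (e ⁻¹' s).ncard = s.ncard :=
  congrArg ENat.toNat (Set.encard_preimage_of_bijective e.bijective s)

theorem pos_of_card_eq_sq {A : Type*} [Finite A] [Nonempty A] {q : ℕ} (h : Nat.card A = q ^ 2) :
    0 < q :=
  Nat.pos_of_ne_zero (pow_ne_zero_iff two_ne_zero |>.1 (h ▸ Nat.card_pos.ne'))

section ConjDiff

variable {F : Type*} [Field F]

/-- The additive map `z ↦ σ z - z`. For `σ z = z ^ q` on `GF(q²)` it is the left-hand side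
`x_r ^ q - x_r` of the equation of `B`, and the trace to `GF(q)` when `q` is even. -/
def conjDiff (σ : F →+* F) : F →+ F := σ.toAddMonoidHom - AddMonoidHom.id F

@[simp]
theorem conjDiff_apply (σ : F →+* F) (z : F) : conjDiff σ z = σ z - z := rfl

variable {σ : F →+* F} {β : F}

theorem map_conjDiff (hσ : Function.Involutive σ) (z : F) :
    σ (conjDiff σ z) = -conjDiff σ z := by
  simp [hσ z]

theorem map_div_conjDiff (hσ : Function.Involutive σ) {c : F} (hc : σ c = -c) (b : F) :
    σ (c / conjDiff σ b) = c / conjDiff σ b := by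
  rw [map_div₀, map_conjDiff hσ, hc, neg_div_neg_eq]

theorem conjDiff_ne_zero (hβ : σ β ≠ β) : conjDiff σ β ≠ 0 := sub_ne_zero.2 hβ

/-- The additive form of Hilbert 90: a preimage of `c` is `β * (c / conjDiff σ β)`, whose second
factor is fixed by `σ`. -/
theorem mem_range_conjDiff_iff (hσ : Function.Involutive σ) (hβ : σ β ≠ β) {c : F} :
    c ∈ (conjDiff σ).range ↔ σ c = -c := by
  refine ⟨fun ⟨z, hz⟩ => hz ▸ map_conjDiff hσ z, fun hc => ⟨β * (c / conjDiff σ β), ?_⟩⟩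
  rw [conjDiff_apply, map_mul, map_div_conjDiff hσ hc, ← sub_mul, ← conjDiff_apply,
    mul_div_cancel₀ c (conjDiff_ne_zero hβ)]

theorem card_ker_conjDiff (hσ : Function.Involutive σ) (hβ : σ β ≠ β) :
    Nat.card (conjDiff σ).ker = Nat.card (conjDiff σ).range := by
  have hrange : (conjDiff σ).range =
      (conjDiff σ).ker.map (AddMonoidHom.mulLeft (conjDiff σ β)) := by
    ext c
    rw [mem_range_conjDiff_iff hσ hβ, AddSubgroup.mem_map]
    constructor
    · intro hc
      refine ⟨c / conjDiff σ β, ?_, mul_div_cancel₀ c (conjDiff_ne_zero hβ)⟩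
      rw [AddMonoidHom.mem_ker, conjDiff_apply, map_div_conjDiff hσ hc, sub_self]
    · rintro ⟨a, ha, rfl⟩
      rw [AddMonoidHom.mem_ker, conjDiff_apply, sub_eq_zero] at ha
      rw [AddMonoidHom.coe_mulLeft, map_mul, map_conjDiff hσ, ha, neg_mul]
  rw [hrange]
  exact (AddSubgroup.card_map_of_injective
    (mul_right_injective₀ (conjDiff_ne_zero hβ))).symm

theorem card_range_conjDiff_sq (hσ : Function.Involutive σ) (hβ : σ β ≠ β) :
    Nat.card (conjDiff σ).range ^ 2 = Nat.card F := by
  rw [sq, ← (conjDiff σ).ker.card_mul_index, AddSubgroup.index_ker, card_ker_conjDiff hσ hβ]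

theorem ncard_conjDiff_comp_fiber_mul {q : ℕ} (hσ : Function.Involutive σ) (hβ : σ β ≠ β)
    (hF : Nat.card F = q ^ 2) {G : Type*} [AddGroup G] {φ : G →+ F}
    (hφ : Function.Surjective φ) {c : F} (hc : σ c = -c) :
    {g | conjDiff σ (φ g) = c}.ncard * q = Nat.card G := by
  have hrange : ((conjDiff σ).comp φ).range = (conjDiff σ).range := by
    rw [AddMonoidHom.range_comp, AddMonoidHom.range_eq_top.2 hφ, AddMonoidHom.range_eq_map]
  have hq : Nat.card (conjDiff σ).range = q :=
    Nat.pow_left_injective two_ne_zero ((card_range_conjDiff_sq hσ hβ).trans hF)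
  rw [← ncard_fiber_mul_card_range ((conjDiff σ).comp φ)
    (hrange ▸ (mem_range_conjDiff_iff hσ hβ).2 hc), hrange, hq]
  rfl

end ConjDiff

section AffineSolutions

variable {F : Type*} [Field F] {ι : Type*} [Fintype ι]

/-- The affine equation of `B`, with `x ↦ x ^ q` replaced by an involution `σ`, on pairs formed by
the coordinates `(x₁, …, x_{r-1})` and the coordinate `x_r`. The quadratic form
`x₁² + ⋯ + x_{r-1}²` and the Hermitian form `x₁ ^ (q + 1) + ⋯ + x_{r-1} ^ (q + 1)` are written as
dot products, so the index type is arbitrary. -/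
def affineSolutions (σ : F →+* F) (α β : F) : Set ((ι → F) × F) :=
  {p | conjDiff σ (p.2 + α * (p.1 ⬝ᵥ p.1)) = conjDiff σ β * ((σ ∘ p.1) ⬝ᵥ p.1)}

variable {σ : F →+* F} {α β : F} {q : ℕ}

theorem map_hermitian (hσ : Function.Involutive σ) (x : ι → F) :
    σ ((σ ∘ x) ⬝ᵥ x) = (σ ∘ x) ⬝ᵥ x := by
  rw [RingHom.map_dotProduct, ← Function.comp_assoc, hσ.comp_self, Function.id_comp,
    dotProduct_comm]

theorem map_conjDiff_mul_hermitian_sub (hσ : Function.Involutive σ) (b z : F) (x : ι → F) :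
    σ (conjDiff σ b * ((σ ∘ x) ⬝ᵥ x) - conjDiff σ z) =
      -(conjDiff σ b * ((σ ∘ x) ⬝ᵥ x) - conjDiff σ z) := by
  rw [map_sub, map_mul, map_conjDiff hσ, map_conjDiff hσ, map_hermitian hσ]
  ring

theorem ncard_affineSolutions_inter_fst_preimage [Finite F] (hσ : Function.Involutive σ)
    (hβ : σ β ≠ β) (hF : Nat.card F = q ^ 2) (s : Set (ι → F)) :
    (affineSolutions σ α β ∩ Prod.fst ⁻¹' s).ncard = s.ncard * q := by
  classical
  have := Fintype.ofFinite F
  have hfiber (u : ι → F) : {y | (u, y) ∈ affineSolutions σ α β ∩ Prod.fst ⁻¹' s}.ncard =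
      if u ∈ s then q else 0 := by
    split_ifs with hu
    · have hcount := ncard_conjDiff_comp_fiber_mul hσ hβ hF (φ := AddMonoidHom.id F)
        Function.surjective_id (map_conjDiff_mul_hermitian_sub hσ β (α * (u ⬝ᵥ u)) u)
      rw [hF, sq] at hcount
      rw [← Nat.eq_of_mul_eq_mul_right (pos_of_card_eq_sq hF) hcount]
      congr 1 with y
      simp [affineSolutions, hu, eq_sub_iff_add_eq, add_sub_add_comm]
    · simp [hu]
  rw [ncard_eq_sum_ncard_fiber, Finset.sum_congr rfl fun u _ => hfiber u, ← Finset.sum_filter,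
    Finset.sum_const, smul_eq_mul, Set.ncard_eq_toFinset_card', Set.filter_mem_univ_eq_toFinset]

theorem dotProduct_surjective {w : ι → F} (hw : w ≠ 0) :
    Function.Surjective (w ⬝ᵥ ·) := by
  classical
  exact LinearMap.surjective (f := dotProductEquiv F ι w) (by simpa using hw)

theorem ncard_affine_hyperplane_mul {a : ι → F} (ha : a ≠ 0) (a₀ : F) :
    {u | a₀ + a ⬝ᵥ u = 0}.ncard * Nat.card F = Nat.card (ι → F) := by
  classical
  have hrange : (dotProductEquiv F ι a).toAddMonoidHom.range = ⊤ :=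
    AddMonoidHom.range_eq_top.2 (dotProduct_surjective ha)
  have hcount := ncard_fiber_mul_card_range (dotProductEquiv F ι a).toAddMonoidHom (c := -a₀)
    (hrange ▸ AddSubgroup.mem_top _)
  rw [hrange, AddSubgroup.card_top] at hcount
  rw [← hcount]
  congr 3 with u
  simp [add_eq_zero_iff_eq_neg']

theorem ncard_conjDiff_dotProduct_pairs_mul_add [Finite F] (hσ : Function.Involutive σ)
    (hβ : σ β ≠ β) (hF : Nat.card F = q ^ 2) (w : (ι → F) ≃ (ι → F)) {g : (ι → F) → F}
    (hg : ∀ z, σ (g z) = -g z) :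
    {p : (ι → F) × (ι → F) | conjDiff σ (w p.1 ⬝ᵥ p.2) = g p.1}.ncard * q + Nat.card (ι → F) ∈
      ({Nat.card (ι → F) ^ 2, Nat.card (ι → F) ^ 2 + Nat.card (ι → F) * q} : Set ℕ) := by
  classical
  have := Fintype.ofFinite F
  set M := Nat.card (ι → F)
  set n : (ι → F) → ℕ := fun z => {x | conjDiff σ (w z ⬝ᵥ x) = g z}.ncard
  set z₀ := w.symm 0
  have hne {z} (hz : z ≠ z₀) : n z * q = M :=
    ncard_conjDiff_comp_fiber_mul hσ hβ hF (φ := (dotProductEquiv F ι (w z)).toAddMonoidHom)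
      (dotProduct_surjective fun h => hz (w.eq_symm_apply.2 h)) (hg z)
  have hz₀ : n z₀ = 0 ∨ n z₀ = M := by
    have hset : {x | conjDiff σ (w z₀ ⬝ᵥ x) = g z₀} = {_x | 0 = g z₀} := by
      simp [z₀]
    by_cases h : 0 = g z₀
    · exact .inr (by simp only [n, hset, h, Set.ofPred_true, Set.ncard_univ, M])
    · exact .inl (by simp only [n, hset, h, Set.ofPred_false, Set.ncard_empty])
  have hM : (Finset.univ.erase z₀).card + 1 = M := by
    rw [Finset.card_erase_add_one (Finset.mem_univ z₀), Finset.card_univ,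
      ← Nat.card_eq_fintype_card]
  have hsum : (∑ z, n z) * q + M = M ^ 2 + n z₀ * q := by
    calc (∑ z, n z) * q + M = ∑ z ∈ Finset.univ.erase z₀, n z * q + n z₀ * q + M := by
          rw [Finset.sum_erase_add _ _ (Finset.mem_univ z₀), ← Finset.sum_mul]
      _ = (Finset.univ.erase z₀).card * M + n z₀ * q + M := by
          rw [Finset.sum_congr rfl fun z hz => hne (Finset.ne_of_mem_erase hz), Finset.sum_const,
            smul_eq_mul]
      _ = M ^ 2 + n z₀ * q := by rw [← hM]; ring
  rw [ncard_eq_sum_ncard_fiber]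
  change (∑ z, n z) * q + M ∈ _
  rw [hsum]
  rcases hz₀ with h | h <;> simp [h]

theorem sumElim_add_dotProduct_self [CharP F 2] (x z : ι → F) :
    Sum.elim x (x + z) ⬝ᵥ Sum.elim x (x + z) = z ⬝ᵥ z := by
  rw [sumElim_dotProduct_sumElim, dotProduct_add, add_dotProduct, add_dotProduct,
    dotProduct_comm z x]
  linear_combination CharTwo.add_self_eq_zero (x ⬝ᵥ x) + CharTwo.add_self_eq_zero (x ⬝ᵥ z)

theorem hermitian_sumElim_add [CharP F 2] (hσ : Function.Involutive σ) (x z : ι → F) :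
    (σ ∘ Sum.elim x (x + z)) ⬝ᵥ Sum.elim x (x + z) =
      (σ ∘ z) ⬝ᵥ z + (σ ((σ ∘ z) ⬝ᵥ x) + (σ ∘ z) ⬝ᵥ x) := by
  have hcross : σ ((σ ∘ z) ⬝ᵥ x) = (σ ∘ x) ⬝ᵥ z := by
    rw [RingHom.map_dotProduct, ← Function.comp_assoc, hσ.comp_self, Function.id_comp,
      dotProduct_comm]
  have hadd : σ ∘ (x + z) = σ ∘ x + σ ∘ z := funext fun i => map_add σ (x i) (z i)
  rw [Sum.comp_elim, sumElim_dotProduct_sumElim, hadd, hcross, dotProduct_add, add_dotProduct,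
    add_dotProduct]
  linear_combination CharTwo.add_self_eq_zero ((σ ∘ x) ⬝ᵥ x)

/-- In the coordinates `(z, x)` with `u = (x, x + z)`, the terms of the graph equation that are
quadratic in `x` cancel in characteristic two, leaving an equation that is affine in `x`. -/
theorem sumElim_add_mem_affineSolutions_iff [CharP F 2] (hσ : Function.Involutive σ) (c₀ : F)
    (c : ι ⊕ ι → F) (x z : ι → F) :
    (Sum.elim x (x + z), c₀ + c ⬝ᵥ Sum.elim x (x + z)) ∈ affineSolutions σ α β ↔
      conjDiff σ ((c ∘ Sum.inl + c ∘ Sum.inr + conjDiff σ β • (σ ∘ z)) ⬝ᵥ x) =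
        conjDiff σ β * ((σ ∘ z) ⬝ᵥ z) -
          conjDiff σ (c₀ + (c ∘ Sum.inr) ⬝ᵥ z + α * (z ⬝ᵥ z)) := by
  have hlinear : c ⬝ᵥ Sum.elim x (x + z) =
      (c ∘ Sum.inl + c ∘ Sum.inr) ⬝ᵥ x + (c ∘ Sum.inr) ⬝ᵥ z := by
    conv_lhs => rw [← Sum.elim_comp_inl_inr c]
    rw [sumElim_dotProduct_sumElim, dotProduct_add, add_dotProduct, add_assoc]
  have hcross (t : F) : conjDiff σ (conjDiff σ β * t) = -(conjDiff σ β * (σ t + t)) := by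
    rw [conjDiff_apply, map_mul, map_conjDiff hσ]
    ring
  rw [affineSolutions, Set.mem_ofPred_eq, sumElim_add_dotProduct_self, hermitian_sumElim_add hσ,
    hlinear, ← sub_eq_zero, ← sub_eq_zero (a := conjDiff σ (_ ⬝ᵥ x)), add_dotProduct _ (_ • _),
    smul_dotProduct, smul_eq_mul]
  simp only [map_add (conjDiff σ), hcross]
  constructor <;> intro h <;> rw [← h] <;> ring

/-- The coordinates `(z, x)` on the vectors `u = (x, x + z)`. -/
def shearEquiv (F ι : Type*) [AddGroup F] : (ι → F) × (ι → F) ≃ (ι ⊕ ι → F) :=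
  ((Equiv.prodComm _ _).trans (Equiv.prodShear (.refl _) Equiv.addLeft)).trans
    (Equiv.sumArrowEquivProdArrow ι ι F).symm

theorem ncard_graph_inter_affineSolutions_sum_mul_add [Finite F] [CharP F 2]
    (hσ : Function.Involutive σ) (hβ : σ β ≠ β) (hF : Nat.card F = q ^ 2) (c₀ : F)
    (c : ι ⊕ ι → F) :
    {u | (u, c₀ + c ⬝ᵥ u) ∈ affineSolutions σ α β}.ncard * q + Nat.card (ι → F) ∈
      ({Nat.card (ι → F) ^ 2, Nat.card (ι → F) ^ 2 + Nat.card (ι → F) * q} : Set ℕ) := by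
  have hw : Function.Bijective fun z : ι → F =>
      c ∘ Sum.inl + c ∘ Sum.inr + conjDiff σ β • (σ ∘ z) :=
    (Equiv.addLeft _).bijective.comp <|
      (MulAction.bijective₀ (conjDiff_ne_zero hβ)).comp (hσ.bijective.comp_left)
  have hpairs := ncard_conjDiff_dotProduct_pairs_mul_add hσ hβ hF (Equiv.ofBijective _ hw)
    fun z => map_conjDiff_mul_hermitian_sub hσ β (c₀ + (c ∘ Sum.inr) ⬝ᵥ z + α * (z ⬝ᵥ z)) z
  convert hpairs using 3
  rw [← ncard_preimage_equiv (shearEquiv F ι)]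
  congr 1 with p
  exact sumElim_add_mem_affineSolutions_iff hσ c₀ c p.2 p.1

theorem comp_equiv_mem_affineSolutions_iff {κ : Type*} [Fintype κ] (e : κ ≃ ι) (x : ι → F)
    (y : F) : (x ∘ e, y) ∈ affineSolutions σ α β ↔ (x, y) ∈ affineSolutions σ α β := by
  simp only [affineSolutions, Set.mem_ofPred_eq, ← Function.comp_assoc,
    comp_equiv_dotProduct_comp_equiv]

theorem ncard_graph_inter_affineSolutions_mul_add [Finite F] [CharP F 2]
    (hσ : Function.Involutive σ) (hβ : σ β ≠ β) (hF : Nat.card F = q ^ 2)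
    (hι : Even (Fintype.card ι)) (c₀ : F) (c : ι → F) :
    {u | (u, c₀ + c ⬝ᵥ u) ∈ affineSolutions σ α β}.ncard * q + q ^ Fintype.card ι ∈
      ({q ^ (2 * Fintype.card ι), q ^ (2 * Fintype.card ι) + q ^ (Fintype.card ι + 1)} :
        Set ℕ) := by
  obtain ⟨k, hk⟩ := hι
  let e : Fin k ⊕ Fin k ≃ ι := Fintype.equivOfCardEq (by simp [hk])
  have hM : Nat.card (Fin k → F) = q ^ Fintype.card ι := by
    rw [Nat.card_fun, hF, Nat.card_fin, ← pow_mul, hk, two_mul]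
  have hgraph := ncard_graph_inter_affineSolutions_sum_mul_add (α := α) hσ hβ hF c₀ (c ∘ e)
  rw [hM, ← pow_mul, ← pow_succ, mul_comm _ 2,
    ← ncard_preimage_equiv (e.symm.arrowCongr (.refl F))] at hgraph
  convert hgraph using 4
  ext u
  change (u, c₀ + c ⬝ᵥ u) ∈ affineSolutions σ α β ↔
    (u ∘ e, c₀ + (c ∘ e) ⬝ᵥ (u ∘ e)) ∈ affineSolutions σ α β
  rw [comp_equiv_dotProduct_comp_equiv, comp_equiv_mem_affineSolutions_iff]

end AffineSolutions

section Projectivization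

theorem ncard_rep_mem_submodule {K V : Type*} [Field K] [Finite K] [AddCommGroup V] [Module K V]
    (W : Submodule K V) : {P : Projectivization K V | P.rep ∈ W}.ncard =
      ∑ i ∈ Finset.range (Module.finrank K W), Nat.card K ^ i := by
  have hinj := Projectivization.map_injective W.subtype W.injective_subtype
  have hrange : {P : Projectivization K V | P.rep ∈ W} =
      Set.range (Projectivization.map W.subtype W.injective_subtype) := by
    ext P
    constructor
    · intro hP
      refine ⟨.mk K ⟨P.rep, hP⟩ fun h => P.rep_nonzero (congrArg Subtype.val h), ?_⟩
      exact P.mk_rep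
    · rintro ⟨Q, rfl⟩
      induction Q using Projectivization.ind with
      | h v hv =>
        obtain ⟨a, ha⟩ := Projectivization.exists_smul_eq_mk_rep K (W.subtype v)
          (W.subtype_injective.ne hv)
        rw [Projectivization.map_mk, Set.mem_ofPred_eq, ← ha]
        exact W.smul_mem _ v.2
  rw [hrange, ← Set.image_univ, Set.ncard_image_of_injective _ hinj, Set.ncard_univ,
    Projectivization.card_of_finrank K W rfl]

theorem finrank_inf_ker_add_one {K V : Type*} [Field K] [AddCommGroup V] [Module K V]
    {U : Submodule K V} [FiniteDimensional K U] {f : Module.Dual K V}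
    (h : ¬U ≤ LinearMap.ker f) :
    Module.finrank K ↥(U ⊓ LinearMap.ker f) + 1 = Module.finrank K U := by
  have hne : f.domRestrict U ≠ 0 := fun h0 => h fun u hu => LinearMap.congr_fun h0 ⟨u, hu⟩
  rw [← Module.Dual.finrank_ker_add_one_of_ne_zero (f := f.domRestrict U) hne,
    LinearMap.ker_domRestrict, ← Submodule.map_comap_subtype, Submodule.finrank_map_subtype_eq]

end Projectivization

section Coordinates

variable {F : Type*} [Field F] {n : ℕ}

/-- The coordinates `(X₁, …, X_{r-1})` of `v = (X₀, …, X_r)`, where `r = n + 1`. -/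
def middle (v : Fin (n + 1 + 1) → F) : Fin n → F := fun i => v i.castSucc.succ

/-- The homogeneous coordinates `(1, x₁, …, x_r)` of the affine point with coordinates
`p = ((x₁, …, x_{r-1}), x_r)`. -/
def affineVec (p : (Fin n → F) × F) : Fin (n + 1 + 1) → F :=
  Fin.cons 1 (Fin.snoc p.1 p.2 : Fin (n + 1) → F)

@[simp]
theorem affineVec_zero (p : (Fin n → F) × F) : affineVec p 0 = 1 := rfl

@[simp]
theorem middle_affineVec (p : (Fin n → F) × F) : middle (affineVec p) = p.1 := by
  ext i
  simp [middle, affineVec]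

@[simp]
theorem affineVec_last (p : (Fin n → F) × F) : affineVec p (Fin.last (n + 1)) = p.2 := by
  rw [← Fin.succ_last]
  simp [affineVec]

theorem affineVec_ne_zero (p : (Fin n → F) × F) : affineVec p ≠ 0 :=
  fun h => one_ne_zero (congrFun h 0)

theorem affineVec_injective : Function.Injective (affineVec (F := F) (n := n)) := fun p p' h =>
  Prod.ext (by simpa using congrArg middle h) (by simpa using congrFun h (Fin.last _))

theorem affineVec_middle_last {v : Fin (n + 1 + 1) → F} (hv : v 0 = 1) :
    affineVec (middle v, v (Fin.last (n + 1))) = v := by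
  ext i
  induction i using Fin.cases with
  | zero => exact hv.symm
  | succ i => induction i using Fin.lastCases <;> simp [affineVec, middle]

theorem sum_ite_middle (g : F → F) (v : Fin (n + 1 + 1) → F) :
    (∑ i : Fin (n + 1 + 1), if 1 ≤ i.1 ∧ i.1 < n + 1 then g (v i) else 0) =
      ∑ i, g (middle v i) := by
  rw [Fin.sum_univ_succ, Fin.sum_univ_castSucc]
  simp [middle]

theorem dotProduct_eq_zero_add_middle_add_last (w v : Fin (n + 1 + 1) → F) :
    w ⬝ᵥ v = w 0 * v 0 + middle w ⬝ᵥ middle v + w (Fin.last (n + 1)) * v (Fin.last (n + 1)) := by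
  rw [dotProduct, Fin.sum_univ_succ, Fin.sum_univ_castSucc, Fin.succ_last, ← add_assoc]
  rfl

theorem affEq_iff_mem_affineSolutions {q : ℕ} {σ : F →+* F} (hσq : ∀ x, σ x = x ^ q) {α β : F}
    (x : Fin (n + 1 + 1) → F) : affEq q (n + 1) α β x ↔
      (middle x, x (Fin.last (n + 1))) ∈ affineSolutions σ α β := by
  rw [affEq, sum_ite_middle (· ^ (2 * q)), sum_ite_middle (· ^ 2), sum_ite_middle (· ^ (q + 1))]
  have hquad : middle x ⬝ᵥ middle x = ∑ i, middle x i ^ 2 := by simp only [dotProduct, sq]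
  have hherm : (σ ∘ middle x) ⬝ᵥ middle x = ∑ i, middle x i ^ (q + 1) := by
    simp only [dotProduct, Function.comp_apply, hσq, pow_succ]
  have hconj : σ (∑ i, middle x i ^ 2) = ∑ i, middle x i ^ (2 * q) := by
    simp only [pow_mul, ← hσq, map_sum]
  rw [affineSolutions, Set.mem_ofPred_eq, hquad, hherm, conjDiff_apply, conjDiff_apply, map_add,
    map_mul, hconj, hσq, hσq, hσq]
  constructor <;> intro h <;> rw [← h] <;> ring

theorem ncard_affineSolutions_inter_nonvertical_hyperplane {σ : F →+* F} {α β : F}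
    {w : Fin (n + 1 + 1) → F}
    (hlast : w (Fin.last (n + 1)) ≠ 0) :
    {p ∈ affineSolutions σ α β | w ⬝ᵥ affineVec p = 0}.ncard =
      {u | (u, -w 0 / w (Fin.last (n + 1)) + (-(w (Fin.last (n + 1)))⁻¹ • middle w) ⬝ᵥ u) ∈
        affineSolutions σ α β}.ncard := by
  have hgraph (p : (Fin n → F) × F) : w ⬝ᵥ affineVec p = 0 ↔
      -w 0 / w (Fin.last (n + 1)) + (-(w (Fin.last (n + 1)))⁻¹ • middle w) ⬝ᵥ p.1 = p.2 := by
    rw [dotProduct_eq_zero_add_middle_add_last, smul_dotProduct, smul_eq_mul]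
    simp only [affineVec_zero, middle_affineVec, affineVec_last]
    field_simp
    constructor <;> intro h <;> linear_combination -h
  symm
  refine Set.ncard_congr (fun u _ => (u, _)) (fun u hu => ⟨hu, (hgraph _).2 rfl⟩)
    (fun u v _ _ h => congrArg Prod.fst h) fun p ⟨hp, hw⟩ => ⟨p.1, ?_, ?_⟩
  · rwa [Set.mem_ofPred_eq, (hgraph p).1 hw]
  · exact Prod.ext rfl ((hgraph p).1 hw)

/-- The point of `PG(r, q²)` with affine coordinates `p`. -/
def affinePoint (p : (Fin n → F) × F) : Projectivization F (Fin (n + 1 + 1) → F) :=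
  .mk F (affineVec p) (affineVec_ne_zero p)

theorem exists_rep_affinePoint_eq_smul (p : (Fin n → F) × F) :
    ∃ a : F, a ≠ 0 ∧ (affinePoint p).rep = a • affineVec p := by
  obtain ⟨a, ha⟩ := Projectivization.exists_smul_eq_mk_rep F (affineVec p) (affineVec_ne_zero p)
  exact ⟨a, a.ne_zero, ha.symm⟩

theorem affinePoint_injective : Function.Injective (affinePoint (F := F) (n := n)) := by
  intro p p' h
  obtain ⟨a, ha⟩ := (Projectivization.mk_eq_mk_iff' F _ _ _ _).1 h
  have ha₁ : a = 1 := by simpa using congrFun ha 0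
  exact affineVec_injective (by rw [← ha, ha₁, one_smul])

theorem mem_range_affinePoint_iff {P : Projectivization F (Fin (n + 1 + 1) → F)} :
    P ∈ Set.range affinePoint ↔ P.rep 0 ≠ 0 := by
  constructor
  · rintro ⟨p, rfl⟩
    obtain ⟨a, ha, hrep⟩ := exists_rep_affinePoint_eq_smul p
    simpa [hrep] using ha
  · intro hP
    have hnorm := affineVec_middle_last (v := (P.rep 0)⁻¹ • P.rep) (inv_mul_cancel₀ hP)
    refine ⟨_, (Projectivization.mk_eq_mk_iff' F _ _ _ P.rep_nonzero).2
      ⟨(P.rep 0)⁻¹, hnorm.symm⟩ |>.trans P.mk_rep⟩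

theorem affinePoint_mem_Bset_iff {q : ℕ} {σ : F →+* F} (hσq : ∀ x, σ x = x ^ q) {α β : F}
    (p : (Fin n → F) × F) :
    affinePoint p ∈ Bset F q (n + 1) α β ↔ p ∈ affineSolutions σ α β := by
  obtain ⟨a, ha, hrep⟩ := exists_rep_affinePoint_eq_smul p
  have hcoord : (fun i => (affinePoint p).rep i / (affinePoint p).rep 0) = affineVec p := by
    ext i
    simp [hrep, ha]
  rw [Bset, Set.mem_ofPred_eq, hcoord, affEq_iff_mem_affineSolutions hσq]
  simp [hrep, ha]

/-- The linear subspace `X₀ = X₁ + ⋯ + X_{r-1} = 0`. In characteristic two it carries the points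
at infinity of `B`. -/
def infinitySubspace (F : Type*) [Field F] (n : ℕ) : Submodule F (Fin (n + 1 + 1) → F) :=
  LinearMap.ker (LinearMap.proj 0) ⊓
    LinearMap.ker (∑ i : Fin n, LinearMap.proj (R := F) (φ := fun _ => F) i.castSucc.succ)

theorem mem_infinitySubspace {v : Fin (n + 1 + 1) → F} :
    v ∈ infinitySubspace F n ↔ v 0 = 0 ∧ ∑ i, middle v i = 0 := by
  simp [infinitySubspace, middle]

theorem finrank_infinitySubspace (hn : n ≠ 0) : Module.finrank F (infinitySubspace F n) = n := by
  obtain ⟨j⟩ : Nonempty (Fin n) := Fin.pos_iff_nonempty.1 (Nat.pos_of_ne_zero hn)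
  have hzero := finrank_inf_ker_add_one (U := ⊤)
    (f := (LinearMap.proj 0 : Module.Dual F (Fin (n + 1 + 1) → F)))
    fun h => one_ne_zero (α := F) (by simpa using h (Submodule.mem_top (x := Pi.single 0 1)))
  have hmiddle := finrank_inf_ker_add_one
    (U := LinearMap.ker (LinearMap.proj 0 : Module.Dual F (Fin (n + 1 + 1) → F)))
    (f := ∑ i : Fin n, LinearMap.proj i.castSucc.succ)
    fun h => one_ne_zero (α := F) (by
      simpa [Pi.single_apply] using @h (Pi.single j.castSucc.succ 1) (by simp))
  rw [top_inf_eq, finrank_top, Module.finrank_fin_fun] at hzero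
  unfold infinitySubspace
  lia

theorem mem_Bset_iff_rep_mem_infinitySubspace [CharP F 2] {q : ℕ} {α β : F}
    {P : Projectivization F (Fin (n + 1 + 1) → F)} (hP : P.rep 0 = 0) :
    P ∈ Bset F q (n + 1) α β ↔ P.rep ∈ infinitySubspace F n := by
  rw [Bset, Set.mem_ofPred_eq, sum_ite_middle (· ^ 2), ← CharTwo.sum_sq, mem_infinitySubspace]
  simp [hP]

end Coordinates

section Counting

variable {F : Type*} [Field F] [Finite F] {n q : ℕ} {σ : F →+* F} {α β : F}

theorem ncard_rep_mem_submodule_of_card_eq_sq (hF : Nat.card F = q ^ 2) {m : ℕ}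
    {W : Submodule F (Fin (n + 1 + 1) → F)} (hW : Module.finrank F W = m) :
    {P : Projectivization F (Fin (n + 1 + 1) → F) | P.rep ∈ W}.ncard =
      ∑ i ∈ Finset.range m, q ^ (2 * i) := by
  rw [ncard_rep_mem_submodule, hW, hF]
  simp only [pow_mul]

theorem ncard_Bset_inter_hyperplane [CharP F 2] (hσq : ∀ x, σ x = x ^ q)
    (w : Fin (n + 1 + 1) → F) :
    (Bset F q (n + 1) α β ∩ {P | w ⬝ᵥ P.rep = 0}).ncard =
      {p ∈ affineSolutions σ α β | w ⬝ᵥ affineVec p = 0}.ncard +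
      {P : Projectivization F (Fin (n + 1 + 1) → F) |
        P.rep ∈ infinitySubspace F n ⊓ LinearMap.ker (dotProductEquiv F _ w)}.ncard := by
  rw [← Set.ncard_inter_add_ncard_sdiff_eq_ncard _ (Set.range affinePoint),
    ← Set.image_preimage_eq_inter_range, Set.ncard_image_of_injective _ affinePoint_injective]
  congr 2
  · ext p
    obtain ⟨a, ha, hrep⟩ := exists_rep_affinePoint_eq_smul p
    simp [affinePoint_mem_Bset_iff hσq, hrep, ha]
  · ext P
    rw [Set.mem_sdiff, mem_range_affinePoint_iff, not_not]
    by_cases hP : P.rep 0 = 0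
    · simp [mem_Bset_iff_rep_mem_infinitySubspace hP, hP]
    · simp [mem_infinitySubspace, hP]

theorem ncard_Bset_inter_hyperplane_of_le [CharP F 2] (hσq : ∀ x, σ x = x ^ q)
    (hF : Nat.card F = q ^ 2) (hn : n ≠ 0) {w : Fin (n + 1 + 1) → F}
    (hw : infinitySubspace F n ≤ LinearMap.ker (dotProductEquiv F _ w)) :
    (Bset F q (n + 1) α β ∩ {P | w ⬝ᵥ P.rep = 0}).ncard =
      {p ∈ affineSolutions σ α β | w ⬝ᵥ affineVec p = 0}.ncard +
        ∑ i ∈ Finset.range n, q ^ (2 * i) := by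
  rw [ncard_Bset_inter_hyperplane hσq, inf_eq_left.2 hw,
    ncard_rep_mem_submodule_of_card_eq_sq hF (finrank_infinitySubspace hn)]

theorem ncard_Bset_inter_hyperplane_of_not_le [CharP F 2] (hσq : ∀ x, σ x = x ^ q)
    (hF : Nat.card F = q ^ 2) (hn : n ≠ 0) {w : Fin (n + 1 + 1) → F}
    (hw : ¬infinitySubspace F n ≤ LinearMap.ker (dotProductEquiv F _ w)) :
    (Bset F q (n + 1) α β ∩ {P | w ⬝ᵥ P.rep = 0}).ncard =
      {p ∈ affineSolutions σ α β | w ⬝ᵥ affineVec p = 0}.ncard +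
        ∑ i ∈ Finset.range (n - 1), q ^ (2 * i) := by
  have hfinrank := finrank_inf_ker_add_one hw
  rw [finrank_infinitySubspace hn] at hfinrank
  rw [ncard_Bset_inter_hyperplane hσq,
    ncard_rep_mem_submodule_of_card_eq_sq hF (Nat.eq_sub_of_add_eq hfinrank)]

theorem ncard_Bset [CharP F 2] (hσ : Function.Involutive σ) (hσq : ∀ x, σ x = x ^ q)
    (hβ : σ β ≠ β) (hF : Nat.card F = q ^ 2) (hn : n ≠ 0) :
    (Bset F q (n + 1) α β).ncard = q ^ (2 * n + 1) + ∑ i ∈ Finset.range n, q ^ (2 * i) := by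
  have haffine := ncard_affineSolutions_inter_fst_preimage (α := α) hσ hβ hF
    (Set.univ : Set (Fin n → F))
  rw [Set.preimage_univ, Set.inter_univ, Set.ncard_univ, Nat.card_fun, Nat.card_fin, hF,
    ← pow_mul, ← pow_succ] at haffine
  have hcount := ncard_Bset_inter_hyperplane_of_le (α := α) (β := β) hσq hF hn (w := 0) (by simp)
  simpa [haffine] using hcount

theorem ncard_Bset_inter_hyperplane_at_infinity [CharP F 2] (hσq : ∀ x, σ x = x ^ q)
    (hF : Nat.card F = q ^ 2) (hn : n ≠ 0) {w : Fin (n + 1 + 1) → F} (hw : w ≠ 0)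
    (hmiddle : middle w = 0) (hlast : w (Fin.last (n + 1)) = 0) :
    (Bset F q (n + 1) α β ∩ {P | w ⬝ᵥ P.rep = 0}).ncard =
      ∑ i ∈ Finset.range n, q ^ (2 * i) := by
  have hdot (v : Fin (n + 1 + 1) → F) : w ⬝ᵥ v = w 0 * v 0 := by
    simp [dotProduct_eq_zero_add_middle_add_last, hmiddle, hlast]
  have hzero : w 0 ≠ 0 := fun h => hw (dotProduct_eq_zero_iff.1 fun v => by simp [hdot, h])
  rw [ncard_Bset_inter_hyperplane_of_le (σ := σ) hσq hF hn]
  · simp [hdot, hzero]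
  · intro v hv
    simp [hdot, (mem_infinitySubspace.1 hv).1]

theorem ncard_Bset_inter_vertical_hyperplane [CharP F 2] (hσ : Function.Involutive σ)
    (hσq : ∀ x, σ x = x ^ q) (hβ : σ β ≠ β) (hF : Nat.card F = q ^ 2)
    {w : Fin (n + 1 + 1) → F} (hmiddle : middle w ≠ 0) (hlast : w (Fin.last (n + 1)) = 0) :
    (Bset F q (n + 1) α β ∩ {P | w ⬝ᵥ P.rep = 0}).ncard ∈
      ({q ^ (2 * n - 1) + ∑ i ∈ Finset.range (n - 1), q ^ (2 * i),
        q ^ (2 * n - 1) + ∑ i ∈ Finset.range n, q ^ (2 * i)} : Set ℕ) := by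
  have hn : n ≠ 0 := by
    rintro rfl
    exact hmiddle (Subsingleton.elim _ _)
  have hq := pos_of_card_eq_sq hF
  have hbase : {u | w 0 + middle w ⬝ᵥ u = 0}.ncard = q ^ (2 * n - 2) := by
    have hcount := ncard_affine_hyperplane_mul hmiddle (w 0)
    rw [Nat.card_fun, Nat.card_fin, hF, ← pow_mul, ← Nat.sub_add_cancel (m := 2) (n := 2 * n)
      (by lia), pow_add] at hcount
    exact Nat.eq_of_mul_eq_mul_right (pow_pos hq 2) hcount
  have haffine : {p ∈ affineSolutions σ α β | w ⬝ᵥ affineVec p = 0}.ncard = q ^ (2 * n - 1) := by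
    have hcount := ncard_affineSolutions_inter_fst_preimage (α := α) hσ hβ hF
      {u | w 0 + middle w ⬝ᵥ u = 0}
    rw [hbase, ← pow_succ, show 2 * n - 2 + 1 = 2 * n - 1 by lia] at hcount
    rw [← hcount]
    congr 1 with p
    simp [dotProduct_eq_zero_add_middle_add_last w, hlast]
  rw [← haffine]
  by_cases hw : infinitySubspace F n ≤ LinearMap.ker (dotProductEquiv F _ w)
  · exact .inr (ncard_Bset_inter_hyperplane_of_le hσq hF hn hw)
  · exact .inl (ncard_Bset_inter_hyperplane_of_not_le hσq hF hn hw)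

theorem ncard_Bset_inter_nonvertical_hyperplane [CharP F 2] (hσ : Function.Involutive σ)
    (hσq : ∀ x, σ x = x ^ q) (hβ : σ β ≠ β) (hF : Nat.card F = q ^ 2) (hn : n ≠ 0)
    (hn_even : Even n) {w : Fin (n + 1 + 1) → F} (hlast : w (Fin.last (n + 1)) ≠ 0) :
    (Bset F q (n + 1) α β ∩ {P | w ⬝ᵥ P.rep = 0}).ncard ∈
      ({q ^ (2 * n - 1) - q ^ (n - 1) + ∑ i ∈ Finset.range (n - 1), q ^ (2 * i),
        q ^ (2 * n - 1) + q ^ n - q ^ (n - 1) + ∑ i ∈ Finset.range (n - 1), q ^ (2 * i)} :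
        Set ℕ) := by
  have hq := pos_of_card_eq_sq hF
  have hw : ¬infinitySubspace F n ≤ LinearMap.ker (dotProductEquiv F _ w) := fun h => hlast <| by
    simpa using @h (Pi.single (Fin.last (n + 1)) 1) <| mem_infinitySubspace.2
      ⟨by simp, by simp [middle]⟩
  have hgraph := ncard_graph_inter_affineSolutions_mul_add (α := α) hσ hβ hF
    (by rwa [Fintype.card_fin]) (-w 0 / w (Fin.last (n + 1)))
    (-(w (Fin.last (n + 1)))⁻¹ • middle w)
  rw [ncard_Bset_inter_hyperplane_of_not_le hσq hF hn hw,
    ncard_affineSolutions_inter_nonvertical_hyperplane hlast]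
  rw [Fintype.card_fin] at hgraph
  have hcancel {m k : ℕ} (h : m * q + q ^ n = k * q) : m = k - q ^ (n - 1) := by
    rw [← pow_sub_one_mul hn, ← add_mul] at h
    exact Nat.eq_sub_of_add_eq (Nat.eq_of_mul_eq_mul_right hq h)
  have hpow : q ^ (2 * n) = q ^ (2 * n - 1) * q := (pow_sub_one_mul (by lia) q).symm
  rw [hpow, pow_succ, ← add_mul] at hgraph
  exact hgraph.imp (fun h => congrArg (· + _) (hcancel h)) (fun h => congrArg (· + _) (hcancel h))

theorem ncard_Bset_inter_hyperplane_mem [CharP F 2] (hσ : Function.Involutive σ)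
    (hσq : ∀ x, σ x = x ^ q) (hβ : σ β ≠ β) (hF : Nat.card F = q ^ 2) (hn : n ≠ 0)
    (hn_even : Even n) {w : Fin (n + 1 + 1) → F} (hw : w ≠ 0) :
    (Bset F q (n + 1) α β ∩ {P | w ⬝ᵥ P.rep = 0}).ncard ∈
      ({∑ i ∈ Finset.range n, q ^ (2 * i),
        q ^ (2 * n - 1) - q ^ (n - 1) + ∑ i ∈ Finset.range (n - 1), q ^ (2 * i),
        q ^ (2 * n - 1) + ∑ i ∈ Finset.range (n - 1), q ^ (2 * i),
        q ^ (2 * n - 1) + q ^ n - q ^ (n - 1) + ∑ i ∈ Finset.range (n - 1), q ^ (2 * i),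
        q ^ (2 * n - 1) + ∑ i ∈ Finset.range n, q ^ (2 * i)} : Set ℕ) := by
  by_cases hlast : w (Fin.last (n + 1)) = 0
  · by_cases hmiddle : middle w = 0
    · exact .inl (ncard_Bset_inter_hyperplane_at_infinity hσq hF hn hw hmiddle hlast)
    · rcases ncard_Bset_inter_vertical_hyperplane hσ hσq hβ hF hmiddle hlast with h | h
      · exact .inr <| .inr <| .inl h
      · exact .inr <| .inr <| .inr <| .inr h
  · rcases ncard_Bset_inter_nonvertical_hyperplane hσ hσq hβ hF hn hn_even hlast with h | h
    · exact .inr <| .inl h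
    · exact .inr <| .inr <| .inr <| .inl h

end Counting

theorem exists_involutive_ringHom_eq_pow {F : Type*} [Field F] [Fintype F] {q : ℕ}
    (hq : IsPrimePow q) (hF : Fintype.card F = q ^ 2) :
    ∃ σ : F →+* F, Function.Involutive σ ∧ ∀ x, σ x = x ^ q := by
  obtain ⟨p, e, hp, -, rfl⟩ := hq
  have : Fact p.Prime := ⟨hp.nat_prime⟩
  have : CharP F p := charP_of_card_eq_prime_pow (hF.trans (pow_mul p e 2).symm)
  have hσq := iterateFrobenius_def (R := F) p e
  refine ⟨iterateFrobenius F p e, fun x => ?_, hσq⟩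
  rw [hσq, hσq, ← pow_mul, ← sq, ← hF, FiniteField.pow_card]

theorem pow_two_mul_sub_one_div_eq_sum {q : ℕ} (hq : 2 ≤ q) (m : ℕ) :
    (q ^ (2 * m) - 1) / (q ^ 2 - 1) = ∑ i ∈ Finset.range m, q ^ (2 * i) := by
  simp only [pow_mul]
  exact (Nat.geomSum_eq (hq.trans (Nat.le_self_pow two_ne_zero q)) m).symm

/-- size and hyperplane intersection numbers of `B` for `q > 2` even
and `r ≥ 3` odd. -/
theorem statement4 (q r : ℕ) (hq : IsPrimePow q) (hqeven : Even q) (hq2 : 2 < q)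
    (hr : 3 ≤ r) (hrodd : Odd r)
    (F : Type) [Field F] [Fintype F] (hF : Fintype.card F = q ^ 2)
    (α β : F) (hα : α ≠ 0) (hβ : β ^ q ≠ β) :
    Nat.card ↥(Bset F q r α β) = q ^ (2 * r - 1) + ∑ i ∈ Finset.range (r - 1), q ^ (2 * i) ∧
    ∀ f : Module.Dual F (Fin (r + 1) → F), f ≠ 0 →
      Nat.card ↥(Bset F q r α β ∩ {P | f P.rep = 0}) ∈
        ({(q ^ (2 * (r - 1)) - 1) / (q ^ 2 - 1),
          q ^ (2 * r - 3) - q ^ (r - 2) + (q ^ (2 * (r - 2)) - 1) / (q ^ 2 - 1),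
          q ^ (2 * r - 3) + (q ^ (2 * (r - 2)) - 1) / (q ^ 2 - 1),
          q ^ (2 * r - 3) + q ^ (r - 1) - q ^ (r - 2) + (q ^ (2 * (r - 2)) - 1) / (q ^ 2 - 1),
          q ^ (2 * r - 3) + (q ^ (2 * (r - 1)) - 1) / (q ^ 2 - 1)} : Set ℕ) := by
  obtain ⟨σ, hσ, hσq⟩ := exists_involutive_ringHom_eq_pow hq hF
  have hchar : CharP F 2 := ringChar.of_eq (FiniteField.even_card_iff_char_two.2 (by
    rw [hF]; exact Nat.even_iff.1 (hqeven.pow_of_ne_zero two_ne_zero)))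
  have hσβ : σ β ≠ β := by rwa [hσq]
  have hcard : Nat.card F = q ^ 2 := Nat.card_eq_fintype_card.trans hF
  obtain ⟨k, rfl⟩ := hrodd
  have hn : 2 * k ≠ 0 := by lia
  simp only [Nat.card_coe_set_eq, pow_two_mul_sub_one_div_eq_sum hq2.le, Nat.add_sub_cancel,
    show 2 * (2 * k + 1) - 1 = 2 * (2 * k) + 1 by lia, show 2 * k + 1 - 2 = 2 * k - 1 by lia,
    show 2 * (2 * k + 1) - 3 = 2 * (2 * k) - 1 by lia]
  refine ⟨ncard_Bset hσ hσq hσβ hcard hn, fun f hf => ?_⟩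
  obtain ⟨w, rfl⟩ := (dotProductEquiv F _).surjective f
  have hw : w ≠ 0 := fun h => hf (by simp [h])
  simp only [dotProductEquiv_apply_apply]
  exact ncard_Bset_inter_hyperplane_mem hσ hσq hσβ hcard hn (even_two_mul k) hw
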